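/- The codimension three Gorenstein sequences of Sperner number (maximum value) at most six are exactly: (1,3^k,1), (1,3,4^k,3,1), (1,3,4,5^k,4,3,1), (1,3,4,5,6^k,5,4,3,1), (1,3,5^k,3,1), (1,3,5,6^k,5,3,1), and (1,3,6^k,3,1), where k ≥ 1 and exponents denote repetition. -/

import Mathlib

/- Common background: standard graded Artinian (Gorenstein) quotients of a
polynomial ring, their graded pieces, Hilbert function, socle degree,
Lefschetz-type conditions, and Macaulay contraction duality. -/

noncomputable section
open MvPolynomial
open scoped Classical

variable {K : Type*} [Field K] {n : ℕ}

/-- The degree-`i` graded component of `R/I`: the image in the quotient of the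
homogeneous polynomials of degree `i`. -/
def gradedPiece (I : Ideal (MvPolynomial (Fin n) K)) (i : ℕ) :
    Submodule K (MvPolynomial (Fin n) K ⧸ I) :=
  (homogeneousSubmodule (Fin n) K i).map (Ideal.Quotient.mkₐ K I).toLinearMap

/-- The Hilbert function of `R/I`. -/
def hilbFn (I : Ideal (MvPolynomial (Fin n) K)) (i : ℕ) : ℕ :=
  Module.finrank K (gradedPiece I i)

/-- `I` is a homogeneous ideal. -/
def IsHomogIdeal (I : Ideal (MvPolynomial (Fin n) K)) : Prop :=
  ∀ p ∈ I, ∀ i, homogeneousComponent i p ∈ I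

/-- The socle of `R/I`: elements killed by every variable. -/
def socleSub (I : Ideal (MvPolynomial (Fin n) K)) :
    Submodule K (MvPolynomial (Fin n) K ⧸ I) :=
  ⨅ v : Fin n, LinearMap.ker (LinearMap.mulLeft K (Ideal.Quotient.mk I (X v)))

/-- `R/I` is a standard graded Artinian Gorenstein algebra. -/
def IsAG (I : Ideal (MvPolynomial (Fin n) K)) : Prop :=
  IsHomogIdeal I ∧ I ≠ ⊤ ∧ FiniteDimensional K (MvPolynomial (Fin n) K ⧸ I) ∧
    Module.finrank K (socleSub I) = 1

/-- The socle degree: the top degree with nonzero component. -/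
def socDeg (I : Ideal (MvPolynomial (Fin n) K)) : ℕ :=
  sSup {i | hilbFn I i ≠ 0}

/-- Multiplication by `ℓ ^ d` maps `A_u` bijectively onto `A_v`. -/
def PowMulBij (I : Ideal (MvPolynomial (Fin n) K)) (ℓ : MvPolynomial (Fin n) K ⧸ I)
    (d u v : ℕ) : Prop :=
  (∀ a ∈ gradedPiece I u, ℓ ^ d * a = 0 → a = 0) ∧
  (∀ b ∈ gradedPiece I v, ∃ a ∈ gradedPiece I u, ℓ ^ d * a = b)

/-- `(A, ℓ)` is a strong Lefschetz pair: `ℓ^(j-2i) : A_i → A_(j-i)` is bijective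
for all `0 ≤ i ≤ ⌊j/2⌋`, `j` the socle degree. -/
def SLPair (I : Ideal (MvPolynomial (Fin n) K)) (ℓ : MvPolynomial (Fin n) K ⧸ I) : Prop :=
  ∀ i, 2 * i ≤ socDeg I → PowMulBij I ℓ (socDeg I - 2 * i) i (socDeg I - i)

/-- `A = R/I` has the strong Lefschetz property. -/
def StrongLefschetz (I : Ideal (MvPolynomial (Fin n) K)) : Prop :=
  ∃ ℓ ∈ gradedPiece I 1, SLPair I ℓ

/-- Contraction of `F` by the monomial `x^d`. -/
def contractMon (d : Fin n →₀ ℕ) (F : MvPolynomial (Fin n) K) : MvPolynomial (Fin n) K :=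
  ∑ e ∈ F.support, if d ≤ e then monomial (e - d) (coeff e F) else 0

/-- Contraction action of a polynomial `p` on `F` (Macaulay duality pairing). -/
def contract (p F : MvPolynomial (Fin n) K) : MvPolynomial (Fin n) K :=
  ∑ d ∈ p.support, coeff d p • contractMon d F

/-- The sequence whose values are read off a finite list (zero beyond). -/
def listSeq (L : List ℕ) : ℕ → ℕ := fun i => L.getD i 0

/-- The sequence `(a, mid^k, b)`: prefix `a`, the value `mid` repeated `k` times,
then suffix `b`, and zero afterwards. -/
def repSeq (a : List ℕ) (mid k : ℕ) (b : List ℕ) : ℕ → ℕ :=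
  listSeq (a ++ List.replicate k mid ++ b)

/-
A graded Artinian Gorenstein algebra `A = R/I` in three variables is the quotient by the annihilator
of a functional `φ` on the forms of degree `j + 1`, its socle degree. For a variable `x` the colon
ideal `I : x` is the annihilator of `φ (x * ·)`, so the exact sequence
`0 → R/(I : x)(-1) → R/I → R/(I + x) → 0` compares `A` with a Gorenstein algebra of smaller socle
degree and with a quotient of a polynomial ring in two variables. On Hilbert functions this reads
`T (i + 1) = g (i + 1) + p i`, and the symmetry of `T` and `p` turns it into
`T (i + 1) - T i = g (i + 1) - g (j + 1 - i)`. As long as `g` grows maximally, the first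
differences satisfy `ΔT (i + 1) = Δp i + 1`, and induction on the socle degree applies; once `g`
stops growing it is nonincreasing, and up to the middle degree so is `ΔT`. Hence `T` is an
SI-sequence, and those with `T 1 = 3` and values at most `6` are the seven families.

Conversely, the annihilator of the dual form `x ^ (j - a) * y ^ a + y ^ (j - b) * z ^ b +
z ^ (j - c) * x ^ c` has Hilbert function `min (a + 1) i + min (b + 1) i + min (c + 1) i` in each
degree `1 ≤ i ≤ j / 2`, provided `a`, `b`, `c < ⌊j / 2⌋`.
-/

section Numerics

variable {j : ℕ} {T g p : ℕ → ℕ}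

/-- The first difference `δ₀ = T 0`, `δᵢ = T i - T (i - 1)` of a sequence. The subtraction is
truncated, so this is meaningful only where `T` is nondecreasing. -/
def firstDiff (T : ℕ → ℕ) : ℕ → ℕ
  | 0 => T 0
  | i + 1 => T (i + 1) - T i

/-- Macaulay's growth condition from degree `i` to degree `i + 1` for the Hilbert function of a
quotient of a polynomial ring in two variables. A sequence `f` with `f 0 ≤ 1` satisfies it in every
degree if and only if `f i = i + 1` up to some degree and `f` is nonincreasing from there on. -/
def MacaulayStep (f : ℕ → ℕ) (i : ℕ) : Prop :=
  f (i + 1) ≤ f i ∨ f i = i + 1 ∧ f (i + 1) = i + 2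

theorem le_succ_of_macaulayStep (h : ∀ i, MacaulayStep g i) (h0 : g 0 ≤ 1) (i : ℕ) :
    g i ≤ i + 1 := by
  induction i with
  | zero => exact h0
  | succ i ih =>
    have := h i
    unfold MacaulayStep at this
    lia

theorem le_of_macaulayStep (h : ∀ i, MacaulayStep g i) {a b : ℕ} (ha : g a ≤ a) (hab : a ≤ b) :
    g b ≤ g a := by
  induction b, hab using Nat.le_induction with
  | base => exact le_rfl
  | succ b _ ih =>
    have := h b
    unfold MacaulayStep at this
    lia

/-- SI-sequences of socle degree `j` and codimension at most three: the sequences that are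
symmetric about `j / 2` and whose first difference, up to `j / 2`, satisfies Macaulay's condition.
The zero sequence is allowed. -/
structure IsSISequence (j : ℕ) (T : ℕ → ℕ) : Prop where
  zero_le_one : T 0 ≤ 1
  eq_zero_of_lt : ∀ i, j < i → T i = 0
  symm : ∀ i ≤ j, T (j - i) = T i
  mono : ∀ i, 2 * (i + 1) ≤ j → T i ≤ T (i + 1)
  macaulay : ∀ i, 2 * (i + 1) ≤ j → MacaulayStep (firstDiff T) i

/-- The numerical data of a linear section `0 → B(-1) → A → A/xA → 0` of an algebra `A` with
symmetric Hilbert function `T`, where `B` has an SI-sequence `p` as its Hilbert function and the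
Hilbert function `g` of `A/xA` satisfies Macaulay's condition in two variables. -/
structure IsLinearSection (j : ℕ) (T g p : ℕ → ℕ) : Prop where
  zero_le_one : T 0 ≤ 1
  eq_zero_of_lt : ∀ i, j + 1 < i → T i = 0
  symm : ∀ i ≤ j + 1, T (j + 1 - i) = T i
  section_zero_le : g 0 ≤ T 0
  section_macaulay : ∀ i, MacaulayStep g i
  colon : IsSISequence j p
  succ : ∀ i, T (i + 1) = g (i + 1) + p i

namespace IsLinearSection

theorem section_le (h : IsLinearSection j T g p) (i : ℕ) : g i ≤ i + 1 :=
  le_succ_of_macaulayStep h.section_macaulay (h.section_zero_le.trans h.zero_le_one) i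

theorem succ_add_eq (h : IsLinearSection j T g p) {i : ℕ} (hi : i ≤ j) :
    T (i + 1) + g (j + 1 - i) = T i + g (i + 1) := by
  have hT : T (j - i + 1) = T i := by rw [← h.symm i (by lia), Nat.sub_add_comm hi]
  have hp := h.colon.symm i hi
  have := h.succ i
  have := h.succ (j - i)
  rw [show j + 1 - i = j - i + 1 by lia]
  lia

theorem section_eq_of_lt (h : IsLinearSection j T g p) {i : ℕ} (hi : i + 1 < g (i + 1)) :
    g i = i + 1 ∧ g (i + 1) = i + 2 := by
  have := h.section_le i
  have := h.section_macaulay i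
  unfold MacaulayStep at this
  lia

theorem le_succ (h : IsLinearSection j T g p) {i : ℕ} (hi : 2 * (i + 1) ≤ j + 1) :
    T i ≤ T (i + 1) := by
  rcases le_or_gt (g (i + 1)) (i + 1) with hg | hg
  · have := le_of_macaulayStep h.section_macaulay hg (b := j + 1 - i) (by lia)
    have := h.succ_add_eq (i := i) (by lia)
    lia
  · have := h.section_eq_of_lt hg
    have := h.succ i
    cases i with
    | zero => have := h.zero_le_one; lia
    | succ i =>
      have := h.succ i
      have := h.colon.mono i (by lia)
      lia

theorem firstDiff_succ_of_lt (h : IsLinearSection j T g p) {i : ℕ} (hi : 2 * i ≤ j)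
    (hg : i + 1 < g (i + 1)) : firstDiff T (i + 1) = firstDiff p i + 1 := by
  have := h.section_eq_of_lt hg
  have := h.succ i
  cases i with
  | zero =>
    have := h.zero_le_one
    have := h.section_zero_le
    simp only [firstDiff]
    lia
  | succ i =>
    have := h.succ i
    have := h.colon.mono i (by lia)
    simp only [firstDiff]
    lia

theorem firstDiff_succ_le_of_le (h : IsLinearSection j T g p) {i : ℕ} (hi : 2 * (i + 1) ≤ j + 1)
    (hg : g (i + 1) ≤ i + 1) : firstDiff T (i + 1) ≤ firstDiff T i := by
  have hstep := h.section_macaulay i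
  have hi_eq := h.succ_add_eq (i := i) (by lia)
  unfold MacaulayStep at hstep
  cases i with
  | zero =>
    have := h.symm 0 (by lia)
    have := h.section_zero_le
    simp only [firstDiff, Nat.sub_zero] at *
    lia
  | succ i =>
    have := h.succ_add_eq (i := i) (by lia)
    have := le_of_macaulayStep h.section_macaulay (b := j + 1 - (i + 1))
      (hg.trans (by lia)) (by lia)
    have := le_of_macaulayStep h.section_macaulay (a := j + 1 - (i + 1)) (b := j + 1 - i)
      (by lia) (by lia)
    simp only [firstDiff]
    lia

theorem isSISequence (h : IsLinearSection j T g p) : IsSISequence (j + 1) T where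
  zero_le_one := h.zero_le_one
  eq_zero_of_lt := h.eq_zero_of_lt
  symm := h.symm
  mono _ hi := h.le_succ hi
  macaulay i hi := by
    rcases le_or_gt (g (i + 1)) (i + 1) with hg | hg
    · exact .inl (h.firstDiff_succ_le_of_le hi hg)
    have hsucc := h.firstDiff_succ_of_lt (by lia) hg
    have hgi := (h.section_eq_of_lt hg).1
    cases i with
    | zero =>
      have := h.colon.zero_le_one
      have := h.section_zero_le
      have := h.zero_le_one
      simp only [MacaulayStep, firstDiff] at *
      lia
    | succ i =>
      have := h.firstDiff_succ_of_lt (i := i) (by lia) (by lia)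
      have := h.colon.macaulay i (by lia)
      unfold MacaulayStep at *
      lia

end IsLinearSection

theorem eq_repSeq_of_symm {L : List ℕ} {mid k : ℕ} (hj : j + 1 = k + 2 * L.length)
    (hzero : ∀ i, j < i → T i = 0) (hsymm : ∀ i ≤ j, T (j - i) = T i)
    (hL : ∀ i < L.length, T i = L.getD i 0) (hmid : ∀ i, L.length ≤ i → 2 * i ≤ j → T i = mid)
    (i : ℕ) : T i = repSeq L mid k L.reverse i := by
  have hmid' : ∀ i, L.length ≤ i → i < L.length + k → T i = mid := fun i hi hi' ↦ by
    rcases le_total (2 * i) j with h | h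
    · exact hmid i hi h
    · rw [← hsymm i (by lia)]
      exact hmid _ (by lia) (by lia)
  simp only [repSeq, listSeq]
  rcases lt_or_ge i L.length with h | h
  · rw [hL i h, List.append_assoc, List.getD_append _ _ _ _ h]
  rcases lt_or_ge i (L.length + k) with h' | h'
  · rw [hmid' i h h', List.append_assoc, List.getD_append_right _ _ _ _ h,
      List.getD_append _ _ _ _ (by simp; lia), List.getD_replicate _ (by lia)]
  rw [List.getD_append_right _ _ _ _ (by simp; lia), List.length_append, List.length_replicate]
  rcases le_or_gt i j with hij | hij
  · rw [← hsymm i hij, hL _ (by lia), List.getD_reverse _ (by lia)]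
    congr 1
    lia
  · rw [hzero i hij, List.getD_eq_default _ _ (by simp; lia)]

theorem listSeq_le {L : List ℕ} {B : ℕ} (h : ∀ x ∈ L, x ≤ B) (i : ℕ) : listSeq L i ≤ B := by
  rcases lt_or_ge i L.length with hi | hi
  · rw [listSeq, List.getD_eq_getElem _ _ hi]
    exact h _ (List.getElem_mem hi)
  · rw [listSeq, List.getD_eq_default _ _ hi]
    exact B.zero_le

namespace IsSISequence

theorem two_le_of_one_lt (h : IsSISequence j T) (h1 : 1 < T 1) : 2 ≤ j := by
  by_contra! hj
  have := h.zero_le_one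
  interval_cases j
  · simp [h.eq_zero_of_lt 1 one_pos] at h1
  · have := h.symm 0 one_pos.le
    rw [Nat.sub_zero] at this
    lia

theorem apply_zero_of_one_lt (h : IsSISequence j T) (h1 : 1 < T 1) : T 0 = 1 := by
  have := h.zero_le_one
  have := h.macaulay 0 (h.two_le_of_one_lt h1)
  simp only [MacaulayStep, firstDiff] at this
  lia

theorem eq_of_succ_le (h : IsSISequence j T) {m : ℕ} (hm : 2 * (m + 1) ≤ j → T (m + 1) ≤ T m)
    {i : ℕ} (hmi : m ≤ i) (hi : 2 * i ≤ j) : T i = T m := by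
  have hdiff : ∀ i, m ≤ i → 2 * (i + 1) ≤ j → firstDiff T (i + 1) = 0 := by
    intro i hmi hi
    induction i, hmi using Nat.le_induction with
    | base => exact Nat.sub_eq_zero_of_le (hm hi)
    | succ i _ ih =>
      have := h.macaulay (i + 1) (by lia)
      have := ih (by lia)
      unfold MacaulayStep at *
      lia
  induction i, hmi using Nat.le_induction with
  | base => rfl
  | succ i hmi ih =>
    rw [← ih (by lia)]
    exact (Nat.le_of_sub_eq_zero (hdiff i hmi hi)).antisymm (h.mono i hi)

theorem eq_repSeq_or_lt (h : IsSISequence j T) {m : ℕ} (hm : 2 * m ≤ j) :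
    (∃ k, 1 ≤ k ∧ ∀ i, T i =
        repSeq ((List.range m).map T) (T m) k ((List.range m).map T).reverse i) ∨
      2 * (m + 1) ≤ j ∧ T m < T (m + 1) := by
  rw [or_iff_not_imp_right, not_and, not_lt]
  intro hlt
  refine ⟨j + 1 - 2 * m, by lia, eq_repSeq_of_symm (by simp; lia) h.eq_zero_of_lt h.symm ?_ ?_⟩
  · intro i hi
    rw [List.getD_eq_getElem _ _ hi, List.getElem_map, List.getElem_range]
  · simpa using fun i ↦ h.eq_of_succ_le hlt

end IsSISequence

/-- `T` belongs to one of the seven families of sequences in the classification. -/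
def HasSmallShape (T : ℕ → ℕ) : Prop :=
  ∃ k : ℕ, 1 ≤ k ∧
    ((∀ i, T i = repSeq [1] 3 k [1] i) ∨
     (∀ i, T i = repSeq [1, 3] 4 k [3, 1] i) ∨
     (∀ i, T i = repSeq [1, 3, 4] 5 k [4, 3, 1] i) ∨
     (∀ i, T i = repSeq [1, 3, 4, 5] 6 k [5, 4, 3, 1] i) ∨
     (∀ i, T i = repSeq [1, 3] 5 k [3, 1] i) ∨
     (∀ i, T i = repSeq [1, 3, 5] 6 k [5, 3, 1] i) ∨
     (∀ i, T i = repSeq [1, 3] 6 k [3, 1] i))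

theorem HasSmallShape.apply_one (h : HasSmallShape T) : T 1 = 3 := by
  obtain ⟨k, hk, h⟩ := h
  obtain ⟨k, rfl⟩ := Nat.exists_eq_succ_of_ne_zero (by lia : k ≠ 0)
  rcases h with h | h | h | h | h | h | h <;> exact h 1

theorem HasSmallShape.le_six (h : HasSmallShape T) (i : ℕ) : T i ≤ 6 := by
  obtain ⟨k, -, h⟩ := h
  rcases h with h | h | h | h | h | h | h <;> rw [h, repSeq] <;> exact listSeq_le (by grind) i

theorem IsSISequence.hasSmallShape (h : IsSISequence j T) (h1 : T 1 = 3) (h6 : ∀ i, T i ≤ 6) :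
    HasSmallShape T := by
  have hj := h.two_le_of_one_lt (by lia)
  have h0 := h.apply_zero_of_one_lt (by lia)
  have step (i) (hi : 2 * (i + 2) ≤ j) := h.macaulay (i + 1) hi
  simp only [MacaulayStep, firstDiff] at step
  obtain ⟨k, hk, hT⟩ | ⟨hj, hlt⟩ := h.eq_repSeq_or_lt (m := 1) hj
  · exact ⟨k, hk, .inl (by simpa [h0, h1] using hT)⟩
  have h2 : T 2 = 4 ∨ T 2 = 5 ∨ T 2 = 6 := by grind
  obtain ⟨k, hk, hT⟩ | ⟨hj, hlt⟩ := h.eq_repSeq_or_lt hj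
  · refine ⟨k, hk, ?_⟩
    rcases h2 with h2 | h2 | h2
    · exact .inr (.inl (by simpa [List.range_succ, h0, h1, h2] using hT))
    · exact .inr (.inr (.inr (.inr (.inl (by simpa [List.range_succ, h0, h1, h2] using hT)))))
    · iterate 6 right
      simpa [List.range_succ, h0, h1, h2] using hT
  obtain ⟨h2, h3⟩ | ⟨h2, h3⟩ : T 2 = 4 ∧ T 3 = 5 ∨ T 2 = 5 ∧ T 3 = 6 := by grind
  · obtain ⟨k, hk, hT⟩ | ⟨hj, hlt⟩ := h.eq_repSeq_or_lt hj
    · exact ⟨k, hk, .inr (.inr (.inl (by simpa [List.range_succ, h0, h1, h2, h3] using hT)))⟩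
    have h4 : T 4 = 6 := by grind
    obtain ⟨k, hk, hT⟩ | ⟨-, hlt⟩ := h.eq_repSeq_or_lt hj
    · refine ⟨k, hk, .inr (.inr (.inr (.inl ?_)))⟩
      simpa [List.range_succ, h0, h1, h2, h3, h4] using hT
    · exact absurd (h6 5) (by lia)
  · obtain ⟨k, hk, hT⟩ | ⟨-, hlt⟩ := h.eq_repSeq_or_lt hj
    · refine ⟨k, hk, .inr (.inr (.inr (.inr (.inr (.inl ?_)))))⟩
      simpa [List.range_succ, h0, h1, h2, h3] using hT
    · exact absurd (h6 4) (by lia)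

end Numerics

section Forms

section HomogeneousComponent

attribute [local instance] MvPolynomial.gradedAlgebra

variable {σ R : Type*} [CommSemiring R] {p : MvPolynomial σ R} {d : ℕ}

theorem homogeneousComponent_add_mul (hp : p.IsHomogeneous d) (q : MvPolynomial σ R) (i : ℕ) :
    homogeneousComponent (d + i) (p * q) = p * homogeneousComponent i q := by
  simp only [← decomposition.decompose'_apply]
  exact DirectSum.coe_decompose_mul_add_of_left_mem (homogeneousSubmodule σ R) hp

theorem homogeneousComponent_mul_of_lt (hp : p.IsHomogeneous d) (q : MvPolynomial σ R) {i : ℕ}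
    (hi : i < d) : homogeneousComponent i (p * q) = 0 := by
  simp only [← decomposition.decompose'_apply]
  exact DirectSum.coe_decompose_mul_of_left_mem_of_not_le (homogeneousSubmodule σ R) hp hi.not_ge

end HomogeneousComponent

instance (i : ℕ) :
    FiniteDimensional K (homogeneousSubmodule (Fin n) K i) :=
  Module.Finite.iff_fg.mpr (homogeneousSubmodule_fg (Fin n) K i)

/-- The forms of degree `i` in the ideal `I`, i.e. the degree-`i` graded component of `I`. -/
def idealPiece (I : Ideal (MvPolynomial (Fin n) K)) (i : ℕ) :
    Submodule K (MvPolynomial (Fin n) K) :=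
  homogeneousSubmodule (Fin n) K i ⊓ I.restrictScalars K

variable {I J : Ideal (MvPolynomial (Fin n) K)} {i : ℕ}

instance : FiniteDimensional K (idealPiece I i) :=
  Submodule.finiteDimensional_inf_left _ _

theorem finrank_map_add_finrank_idealPiece {B : Type*} [CommRing B] [Algebra K B]
    (f : MvPolynomial (Fin n) K →ₐ[K] B) (i : ℕ) :
    Module.finrank K ((homogeneousSubmodule (Fin n) K i).map f.toLinearMap) +
      Module.finrank K (idealPiece (RingHom.ker f) i) =
        Module.finrank K (homogeneousSubmodule (Fin n) K i) := by
  have h := (f.toLinearMap.domRestrict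
    (homogeneousSubmodule (Fin n) K i)).finrank_range_add_finrank_ker
  rw [LinearMap.range_domRestrict, LinearMap.ker_domRestrict, ← Submodule.finrank_map_subtype_eq,
    Submodule.map_comap_subtype] at h
  exact h

theorem hilbFn_add_finrank_idealPiece (I : Ideal (MvPolynomial (Fin n) K)) (i : ℕ) :
    hilbFn I i + Module.finrank K (idealPiece I i) =
      Module.finrank K (homogeneousSubmodule (Fin n) K i) := by
  have hker : RingHom.ker (Ideal.Quotient.mkₐ K I) = I := Ideal.Quotient.mkₐ_ker K I
  have h := finrank_map_add_finrank_idealPiece (Ideal.Quotient.mkₐ K I) i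
  rwa [hker] at h

theorem hilbFn_ker {B : Type*} [CommRing B] [Algebra K B] (f : MvPolynomial (Fin n) K →ₐ[K] B)
    (i : ℕ) : hilbFn (RingHom.ker f) i =
      Module.finrank K ((homogeneousSubmodule (Fin n) K i).map f.toLinearMap) := by
  have := hilbFn_add_finrank_idealPiece (RingHom.ker f) i
  have := finrank_map_add_finrank_idealPiece f i
  lia

theorem hilbFn_anti (h : I ≤ J) (i : ℕ) : hilbFn J i ≤ hilbFn I i := by
  have hle : idealPiece I i ≤ idealPiece J i := inf_le_inf_left _ h
  have := Submodule.finrank_mono hle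
  have := hilbFn_add_finrank_idealPiece I i
  have := hilbFn_add_finrank_idealPiece J i
  lia

theorem hilbFn_zero_le_one (I : Ideal (MvPolynomial (Fin n) K)) : hilbFn I 0 ≤ 1 := by
  have := hilbFn_add_finrank_idealPiece I 0
  rw [homogeneousSubmodule_zero, Submodule.one_eq_span,
    finrank_span_singleton one_ne_zero] at this
  lia

variable {x : MvPolynomial (Fin n) K} {d : ℕ}

theorem idealPiece_inf_map_mulLeft (I : Ideal (MvPolynomial (Fin n) K)) (hx : x.IsHomogeneous d)
    (i : ℕ) :
    idealPiece I (d + i) ⊓ (homogeneousSubmodule (Fin n) K i).map (LinearMap.mulLeft K x) =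
      (idealPiece (I.colon {x}) i).map (LinearMap.mulLeft K x) := by
  ext p
  constructor
  · rintro ⟨⟨-, hxb⟩, b, hb, rfl⟩
    exact ⟨b, ⟨hb, Submodule.mem_colon_singleton.mpr (by rwa [smul_eq_mul, mul_comm])⟩, rfl⟩
  · rintro ⟨b, ⟨hb, hbI⟩, rfl⟩
    refine ⟨⟨hx.mul hb, ?_⟩, b, hb, rfl⟩
    rw [LinearMap.mulLeft_apply, mul_comm]
    exact Submodule.mem_colon_singleton.mp hbI

namespace IsHomogIdeal

theorem idealPiece_sup_span_singleton (hI : IsHomogIdeal I) (hx : x.IsHomogeneous d) (i : ℕ) :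
    idealPiece (I ⊔ Ideal.span {x}) (d + i) =
      idealPiece I (d + i) ⊔ (homogeneousSubmodule (Fin n) K i).map (LinearMap.mulLeft K x) := by
  apply le_antisymm
  · rintro p ⟨hp, hpI⟩
    obtain ⟨a, ha, c, hc, rfl⟩ := Submodule.mem_sup.mp hpI
    obtain ⟨b, rfl⟩ := Ideal.mem_span_singleton'.mp hc
    rw [← homogeneousComponent_eq_self hp, mul_comm b, map_add, homogeneousComponent_add_mul hx]
    exact Submodule.add_mem_sup ⟨homogeneousComponent_isHomogeneous _ _, hI a ha _⟩
      (Submodule.mem_map_of_mem (f := LinearMap.mulLeft K x)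
        (homogeneousComponent_isHomogeneous i b))
  · have hle : I ≤ I ⊔ Ideal.span {x} := le_sup_left
    refine sup_le (inf_le_inf_left _ hle) ?_
    rintro _ ⟨b, hb, rfl⟩
    exact ⟨hx.mul hb, Ideal.mul_mem_right _ _
      (Ideal.mem_sup_right (Ideal.mem_span_singleton_self x))⟩

theorem hilbFn_add_eq (hI : IsHomogIdeal I) (hx : x.IsHomogeneous d) (hx0 : x ≠ 0) (i : ℕ) :
    hilbFn I (d + i) = hilbFn (I ⊔ Ideal.span {x}) (d + i) + hilbFn (I.colon {x}) i := by
  have hfinrank (V : Submodule K (MvPolynomial (Fin n) K)) :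
      Module.finrank K (V.map (LinearMap.mulLeft K x)) = Module.finrank K V :=
    (Submodule.equivMapOfInjective _ (mul_right_injective₀ hx0) V).finrank_eq.symm
  have h := Submodule.finrank_sup_add_finrank_inf_eq (idealPiece I (d + i))
    ((homogeneousSubmodule (Fin n) K i).map (LinearMap.mulLeft K x))
  rw [← hI.idealPiece_sup_span_singleton hx, idealPiece_inf_map_mulLeft I hx, hfinrank,
    hfinrank] at h
  have := hilbFn_add_finrank_idealPiece I (d + i)
  have := hilbFn_add_finrank_idealPiece (I ⊔ Ideal.span {x}) (d + i)
  have := hilbFn_add_finrank_idealPiece (I.colon {x}) i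
  lia

end IsHomogIdeal

end Forms

section TwoVariables

theorem finrank_homogeneousSubmodule (i : ℕ) :
    Module.finrank K (homogeneousSubmodule (Fin n) K i) = (n + i - 1).choose i := by
  have hdeg : {d : Fin n →₀ ℕ | d.degree = i} =
      (Finset.univ : Finset (Fin n)).finsuppAntidiag i := by
    ext d
    simp [Finset.mem_finsuppAntidiag, Finsupp.degree_eq_sum]
  rw [homogeneousSubmodule_eq_finsupp_supported, hdeg,
    (AddMonoidAlgebra.supportedEquivFinsupp _).finrank_eq, Module.finrank_finsupp_self,
    ← Nat.card_eq_fintype_card, Nat.card_coe_set_eq, Set.ncard_coe_finset,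
    Finset.card_finsuppAntidiag_nat_eq_choose, Finset.card_univ, Fintype.card_fin]

theorem exists_hilbFn_eq_of_X_zero_mem {J : Ideal (MvPolynomial (Fin (n + 1)) K)} (hJ : X 0 ∈ J) :
    ∃ J' : Ideal (MvPolynomial (Fin n) K), hilbFn J' = hilbFn J := by
  set f : MvPolynomial (Fin n) K →ₐ[K] MvPolynomial (Fin (n + 1)) K ⧸ J :=
    (Ideal.Quotient.mkₐ K J).comp (rename Fin.succ)
  set g : MvPolynomial (Fin (n + 1)) K →ₐ[K] MvPolynomial (Fin n) K := aeval (Fin.cases 0 X)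
  have hfg : f.comp g = Ideal.Quotient.mkₐ K J := by
    ext v
    cases v using Fin.cases with
    | zero => simpa [f, g] using (Ideal.Quotient.eq_zero_iff_mem.mpr hJ).symm
    | succ v => simp [f, g]
  refine ⟨RingHom.ker f, funext fun i ↦ ?_⟩
  rw [hilbFn_ker, hilbFn, gradedPiece]
  suffices h : (homogeneousSubmodule (Fin n) K i).map f.toLinearMap =
      (homogeneousSubmodule (Fin (n + 1)) K i).map (Ideal.Quotient.mkₐ K J).toLinearMap by rw [h]
  apply le_antisymm
  · rintro _ ⟨p, hp, rfl⟩
    exact ⟨rename Fin.succ p, IsHomogeneous.rename_isHomogeneous hp, rfl⟩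
  · rintro _ ⟨p, hp, rfl⟩
    refine ⟨g p, ?_, DFunLike.congr_fun hfg p⟩
    rw [← one_mul i]
    refine IsHomogeneous.aeval (n := 1) hp _ fun v ↦ ?_
    cases v using Fin.cases with
    | zero => exact isHomogeneous_zero _ _ _
    | succ v => exact isHomogeneous_X _ _

theorem X_pow_dvd_of_idealPiece_succ_le {I : Ideal (MvPolynomial (Fin n) K)} {a b : Fin n}
    (hab : a ≠ b) {i : ℕ}
    (h : idealPiece I (i + 1) ≤ (idealPiece I i).map (LinearMap.mulLeft K (X a))) (k : ℕ) :
    ∀ p ∈ idealPiece I i, X a ^ k ∣ p := by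
  induction k with
  | zero => simp
  | succ k ih =>
    intro p ⟨hp, hpI⟩
    have hbp : X b * p ∈ idealPiece I (i + 1) := by
      rw [add_comm]
      exact ⟨(isHomogeneous_X K b).mul hp, Ideal.mul_mem_left _ _ hpI⟩
    obtain ⟨q, hq, hqp⟩ := h hbp
    have hdvd : X a ^ (k + 1) ∣ X b * p := by
      rw [← hqp, pow_succ']
      exact mul_dvd_mul_left _ (ih q hq)
    exact X_prime.pow_dvd_of_dvd_mul_left _ (by simpa [X_dvd_X] using hab) hdvd

theorem finrank_idealPiece_lt_succ {I : Ideal (MvPolynomial (Fin n) K)} {a b : Fin n}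
    (hab : a ≠ b) {i : ℕ} (h : idealPiece I i ≠ ⊥) :
    Module.finrank K (idealPiece I i) < Module.finrank K (idealPiece I (i + 1)) := by
  set V := (idealPiece I i).map (LinearMap.mulLeft K (X a))
  have hV : Module.finrank K V = Module.finrank K (idealPiece I i) :=
    (Submodule.equivMapOfInjective _ (mul_right_injective₀ (X_ne_zero a)) _).finrank_eq.symm
  have hle : V ≤ idealPiece I (i + 1) := by
    rintro _ ⟨p, ⟨hp, hpI⟩, rfl⟩
    rw [add_comm]
    exact ⟨(isHomogeneous_X K a).mul hp, Ideal.mul_mem_left _ _ hpI⟩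
  rw [← hV]
  refine Submodule.finrank_lt_finrank_of_lt (hle.lt_of_not_ge fun hge ↦ ?_)
  obtain ⟨p, hp, hp0⟩ := Submodule.exists_mem_ne_zero_of_ne_bot h
  obtain ⟨q, rfl⟩ := X_pow_dvd_of_idealPiece_succ_le hab hge (i + 1) p hp
  have hdeg := hp.1.totalDegree hp0
  rw [totalDegree_mul_of_isDomain (left_ne_zero_of_mul hp0) (right_ne_zero_of_mul hp0),
    totalDegree_X_pow] at hdeg
  lia

theorem macaulayStep_hilbFn (J : Ideal (MvPolynomial (Fin 2) K)) (i : ℕ) :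
    MacaulayStep (hilbFn J) i := by
  have hi := hilbFn_add_finrank_idealPiece J i
  have hi' := hilbFn_add_finrank_idealPiece J (i + 1)
  simp only [finrank_homogeneousSubmodule, show ∀ m, 2 + m - 1 = m + 1 by lia,
    Nat.choose_succ_self_right] at hi hi'
  unfold MacaulayStep
  by_cases h : idealPiece J i = ⊥
  · rw [h, finrank_bot] at hi
    lia
  · have := finrank_idealPiece_lt_succ (zero_ne_one (α := Fin 2)) h
    lia

end TwoVariables

section MacaulayDuality

variable {I : Ideal (MvPolynomial (Fin n) K)} {φ : MvPolynomial (Fin n) K →ₗ[K] K} {j : ℕ}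

theorem finrank_range_flip {V W : Type*} [AddCommGroup V] [Module K V] [FiniteDimensional K V]
    [AddCommGroup W] [Module K W] [FiniteDimensional K W] (B : V →ₗ[K] W →ₗ[K] K) :
    Module.finrank K (LinearMap.range B.flip) = Module.finrank K (LinearMap.range B) := by
  have h : B.flip = (B.dualMap : Module.Dual K (Module.Dual K W) →ₗ[K] Module.Dual K V) ∘ₗ
      (Module.evalEquiv K W).toLinearMap := by
    ext w v
    simp
  rw [h, LinearMap.range_comp_of_range_eq_top _ (LinearEquiv.range _)]
  exact LinearMap.finrank_range_dualMap_eq_finrank_range (V₂ := Module.Dual K W) B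

/-- The annihilator of a linear functional `φ` on the polynomial ring under the action
`(p • φ) q = φ (p * q)`, i.e. the largest ideal contained in the kernel of `φ`. For a functional on
the forms of degree `j` this is Macaulay's inverse system construction. -/
def annIdeal (φ : MvPolynomial (Fin n) K →ₗ[K] K) : Ideal (MvPolynomial (Fin n) K) where
  carrier := {p | ∀ q, φ (p * q) = 0}
  zero_mem' := by simp
  add_mem' := by
    intro a b ha hb q
    rw [add_mul, map_add, ha, hb, add_zero]
  smul_mem' := by
    intro c p hp q
    rw [smul_eq_mul, mul_comm c p, mul_assoc, hp]

theorem apply_eq_zero_of_mem_annIdeal {p : MvPolynomial (Fin n) K} (hp : p ∈ annIdeal φ) :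
    φ p = 0 := by
  simpa using hp 1

theorem annIdeal_comp_mulLeft (φ : MvPolynomial (Fin n) K →ₗ[K] K) (x : MvPolynomial (Fin n) K) :
    annIdeal (φ ∘ₗ LinearMap.mulLeft K x) = (annIdeal φ).colon {x} := by
  ext p
  rw [Submodule.mem_colon_singleton, smul_eq_mul, mul_comm]
  exact forall_congr' fun q ↦ by rw [mul_assoc]; rfl

/-- The functional `φ` lives on the forms of degree `j`: it ignores all other homogeneous
components. -/
def ConcentratedIn (φ : MvPolynomial (Fin n) K →ₗ[K] K) (j : ℕ) : Prop :=
  ∀ p, φ (homogeneousComponent j p) = φ p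

/-- The bilinear pairing `(p, q) ↦ φ (p * q)` between forms of degree `i` and forms of
degree `k`. -/
def formPairing (φ : MvPolynomial (Fin n) K →ₗ[K] K) (i k : ℕ) :
    homogeneousSubmodule (Fin n) K i →ₗ[K] homogeneousSubmodule (Fin n) K k →ₗ[K] K :=
  ((LinearMap.mul K (MvPolynomial (Fin n) K)).compr₂ φ).domRestrict₁₂ _ _

theorem formPairing_apply (φ : MvPolynomial (Fin n) K →ₗ[K] K) (i k : ℕ)
    (p : homogeneousSubmodule (Fin n) K i) (q : homogeneousSubmodule (Fin n) K k) :
    formPairing φ i k p q = φ (p * q) := rfl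

theorem formPairing_flip (φ : MvPolynomial (Fin n) K →ₗ[K] K) (i k : ℕ) :
    (formPairing φ i k).flip = formPairing φ k i := by
  refine LinearMap.ext fun p ↦ LinearMap.ext fun q ↦ ?_
  rw [LinearMap.flip_apply, formPairing_apply, formPairing_apply, mul_comm]

namespace ConcentratedIn

variable {p : MvPolynomial (Fin n) K} {i k : ℕ}

theorem comp_mulLeft {x : MvPolynomial (Fin n) K} {d : ℕ} (h : ConcentratedIn φ (d + j))
    (hx : x.IsHomogeneous d) : ConcentratedIn (φ ∘ₗ LinearMap.mulLeft K x) j := fun p ↦ by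
  rw [LinearMap.comp_apply, LinearMap.mulLeft_apply, ← homogeneousComponent_add_mul hx, h]
  rfl

theorem mem_annIdeal_of_lt (h : ConcentratedIn φ j) (hp : p.IsHomogeneous i) (hij : j < i) :
    p ∈ annIdeal φ := fun q ↦ by
  rw [← h, homogeneousComponent_mul_of_lt hp q hij, map_zero]

theorem apply_mul_homogeneousComponent (h : ConcentratedIn φ j) (hp : p.IsHomogeneous i)
    (q : MvPolynomial (Fin n) K) (hij : i + k = j) :
    φ (p * homogeneousComponent k q) = φ (p * q) := by
  rw [← homogeneousComponent_add_mul hp, hij, h]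

theorem mem_annIdeal_iff (h : ConcentratedIn φ j) (hp : p.IsHomogeneous i) (hij : i + k = j) :
    p ∈ annIdeal φ ↔ ∀ q : MvPolynomial (Fin n) K, q.IsHomogeneous k → φ (p * q) = 0 := by
  refine ⟨fun hI q _ ↦ hI q, fun hk q ↦ ?_⟩
  rw [← h.apply_mul_homogeneousComponent hp q hij]
  exact hk _ (homogeneousComponent_isHomogeneous _ _)

theorem isHomogIdeal (h : ConcentratedIn φ j) : IsHomogIdeal (annIdeal φ) := by
  intro p hp i
  have hi := homogeneousComponent_isHomogeneous i p
  rcases lt_or_ge j i with hij | hij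
  · exact h.mem_annIdeal_of_lt hi hij
  · rw [h.mem_annIdeal_iff hi (Nat.add_sub_of_le hij)]
    intro q hq
    rw [mul_comm, h.apply_mul_homogeneousComponent hq p (Nat.sub_add_cancel hij), mul_comm]
    exact hp q

theorem idealPiece_annIdeal (h : ConcentratedIn φ j) (hij : i + k = j) :
    idealPiece (annIdeal φ) i =
      (LinearMap.ker (formPairing φ i k)).map (homogeneousSubmodule (Fin n) K i).subtype := by
  ext p
  simp only [Submodule.mem_map, LinearMap.mem_ker, LinearMap.ext_iff, Subtype.exists,
    Submodule.subtype_apply, exists_and_right, exists_eq_right, Subtype.forall,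
    formPairing_apply, LinearMap.zero_apply]
  exact ⟨fun ⟨hp, hpI⟩ ↦ ⟨hp, (h.mem_annIdeal_iff hp hij).mp hpI⟩,
    fun ⟨hp, hpφ⟩ ↦ ⟨hp, (h.mem_annIdeal_iff hp hij).mpr hpφ⟩⟩

theorem hilbFn_annIdeal (h : ConcentratedIn φ j) (hij : i + k = j) :
    hilbFn (annIdeal φ) i = Module.finrank K (LinearMap.range (formPairing φ i k)) := by
  have h₁ := hilbFn_add_finrank_idealPiece (annIdeal φ) i
  have h₂ := (formPairing φ i k).finrank_range_add_finrank_ker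
  rw [h.idealPiece_annIdeal hij, Submodule.finrank_map_subtype_eq] at h₁
  lia

theorem hilbFn_annIdeal_symm (h : ConcentratedIn φ j) (hij : i ≤ j) :
    hilbFn (annIdeal φ) (j - i) = hilbFn (annIdeal φ) i := by
  rw [h.hilbFn_annIdeal (Nat.sub_add_cancel hij), h.hilbFn_annIdeal (Nat.add_sub_of_le hij),
    ← formPairing_flip, finrank_range_flip]

theorem hilbFn_annIdeal_of_lt (h : ConcentratedIn φ j) (hij : j < i) :
    hilbFn (annIdeal φ) i = 0 := by
  have hbot : gradedPiece (annIdeal φ) i = ⊥ := by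
    rw [gradedPiece, ← LinearMap.le_ker_iff_map]
    exact fun p hp ↦ Ideal.Quotient.eq_zero_iff_mem.mpr (h.mem_annIdeal_of_lt hp hij)
  rw [hilbFn, hbot, finrank_bot]

theorem isLinearSection {φ : MvPolynomial (Fin 3) K →ₗ[K] K} (h : ConcentratedIn φ (j + 1))
    (hcolon : IsSISequence j (hilbFn ((annIdeal φ).colon {X 0}))) :
    IsLinearSection j (hilbFn (annIdeal φ)) (hilbFn (annIdeal φ ⊔ Ideal.span {X 0}))
      (hilbFn ((annIdeal φ).colon {X 0})) where
  zero_le_one := hilbFn_zero_le_one _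
  eq_zero_of_lt _ hi := h.hilbFn_annIdeal_of_lt hi
  symm _ hi := h.hilbFn_annIdeal_symm hi
  section_zero_le := hilbFn_anti le_sup_left 0
  section_macaulay i := by
    obtain ⟨J, hJ⟩ := exists_hilbFn_eq_of_X_zero_mem
      (Ideal.mem_sup_right (Ideal.mem_span_singleton_self (X 0)) :
        X 0 ∈ annIdeal φ ⊔ Ideal.span {X 0})
    exact hJ ▸ macaulayStep_hilbFn J i
  colon := hcolon
  succ i := by
    simpa only [add_comm 1 i] using
      h.isHomogIdeal.hilbFn_add_eq (isHomogeneous_X K 0) (X_ne_zero 0) i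

theorem isSISequence {φ : MvPolynomial (Fin 3) K →ₗ[K] K} (h : ConcentratedIn φ j) :
    IsSISequence j (hilbFn (annIdeal φ)) := by
  induction j generalizing φ with
  | zero => exact
    { zero_le_one := hilbFn_zero_le_one _
      eq_zero_of_lt := fun _ hi ↦ h.hilbFn_annIdeal_of_lt hi
      symm := fun _ hi ↦ h.hilbFn_annIdeal_symm hi
      mono := by lia
      macaulay := by lia }
  | succ j ih =>
    have hcolon := ih (comp_mulLeft (add_comm j 1 ▸ h) (isHomogeneous_X K (0 : Fin 3)))
    rw [annIdeal_comp_mulLeft] at hcolon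
    exact (h.isLinearSection hcolon).isSISequence

end ConcentratedIn

theorem mk_mem_socleSub {p : MvPolynomial (Fin n) K} :
    Ideal.Quotient.mk I p ∈ socleSub I ↔ ∀ v, X v * p ∈ I := by
  simp only [socleSub, Submodule.mem_iInf, LinearMap.mem_ker, LinearMap.mulLeft_apply, ← map_mul,
    Ideal.Quotient.eq_zero_iff_mem]

namespace IsHomogIdeal

theorem exists_forall_mem_of_lt (hI : IsHomogIdeal I)
    [FiniteDimensional K (MvPolynomial (Fin n) K ⧸ I)] :
    ∃ m, ∀ i, m < i → ∀ p : MvPolynomial (Fin n) K, p.IsHomogeneous i → p ∈ I := by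
  let V : ℕ →o Submodule K (MvPolynomial (Fin n) K ⧸ I) :=
    ⟨fun m ↦ (restrictTotalDegree (Fin n) K m).map (Ideal.Quotient.mkₐ K I).toLinearMap,
      fun a b hab ↦ Submodule.map_mono fun p hp ↦ by
        rw [mem_restrictTotalDegree] at hp ⊢
        exact hp.trans hab⟩
  obtain ⟨m, hm⟩ := monotone_stabilizes_iff_noetherian.mpr inferInstance V
  refine ⟨m, fun i hi p hp ↦ ?_⟩
  have hpV : Ideal.Quotient.mk I p ∈ V i :=
    ⟨p, (mem_restrictTotalDegree _ _ _).mpr hp.totalDegree_le, rfl⟩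
  rw [← hm i hi.le] at hpV
  obtain ⟨q, hq, hqp⟩ := hpV
  have hpq := hI _ (Ideal.Quotient.eq.mp hqp.symm) i
  have hqi := homogeneousComponent_eq_zero i q
    (((mem_restrictTotalDegree _ _ _).mp hq).trans_lt hi)
  rwa [map_sub, homogeneousComponent_eq_self hp, hqi, sub_zero] at hpq

theorem exists_mul_mem_socleSub (hI : IsHomogIdeal I)
    [FiniteDimensional K (MvPolynomial (Fin n) K ⧸ I)] {p : MvPolynomial (Fin n) K} (hp : p ∉ I) :
    ∃ q, q * p ∉ I ∧ Ideal.Quotient.mk I (q * p) ∈ socleSub I := by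
  let S : Set ℕ := {i | ∃ q : MvPolynomial (Fin n) K, q.IsHomogeneous i ∧ q * p ∉ I}
  obtain ⟨m, hm⟩ := hI.exists_forall_mem_of_lt
  have hbdd : BddAbove S := ⟨m, fun i ⟨q, hq, hqp⟩ ↦ by
    by_contra! hi
    exact hqp (Ideal.mul_mem_right _ _ (hm i hi q hq))⟩
  have hne : S.Nonempty := ⟨0, 1, isHomogeneous_one _ _, by rwa [one_mul]⟩
  obtain ⟨q, hq, hqp⟩ := Nat.sSup_mem hne hbdd
  refine ⟨q, hqp, mk_mem_socleSub.mpr fun v ↦ ?_⟩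
  by_contra hv
  rw [← mul_assoc] at hv
  have := le_csSup hbdd ⟨X v * q, (isHomogeneous_X K v).mul hq, hv⟩
  lia

theorem exists_isHomogeneous_of_finrank_socleSub (hI : IsHomogIdeal I)
    (hsoc : Module.finrank K (socleSub I) = 1) :
    ∃ j e, e.IsHomogeneous j ∧ e ∉ I ∧
      ∀ p, Ideal.Quotient.mk I p ∈ socleSub I → ∃ c : K, p - c • e ∈ I := by
  obtain ⟨⟨s, hs⟩, hs0, -⟩ := finrank_eq_one_iff'.mp hsoc
  obtain ⟨g, rfl⟩ := Ideal.Quotient.mk_surjective s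
  obtain ⟨j, hj⟩ : ∃ j, homogeneousComponent j g ∉ I := by
    by_contra! hg
    refine hs0 (Subtype.ext (Ideal.Quotient.eq_zero_iff_mem.mpr ?_))
    rw [← sum_homogeneousComponent g]
    exact Ideal.sum_mem _ fun i _ ↦ hg i
  set e := homogeneousComponent j g
  have he : Ideal.Quotient.mk I e ∈ socleSub I := by
    rw [mk_mem_socleSub] at hs ⊢
    intro v
    rw [← homogeneousComponent_add_mul (isHomogeneous_X K v)]
    exact hI _ (hs v) _
  have he0 : (⟨_, he⟩ : socleSub I) ≠ 0 := fun h ↦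
    hj (Ideal.Quotient.eq_zero_iff_mem.mp (congrArg Subtype.val h))
  refine ⟨j, e, homogeneousComponent_isHomogeneous _ _, hj, fun p hp ↦ ?_⟩
  obtain ⟨c, hc⟩ := (finrank_eq_one_iff_of_nonzero' _ he0).mp hsoc ⟨_, hp⟩
  exact ⟨c, Ideal.Quotient.eq.mp (congrArg Subtype.val hc).symm⟩

theorem exists_concentratedIn (hI : IsHomogIdeal I) {e : MvPolynomial (Fin n) K}
    (he : e.IsHomogeneous j) (heI : e ∉ I) :
    ∃ φ : MvPolynomial (Fin n) K →ₗ[K] K, ConcentratedIn φ j ∧ I ≤ annIdeal φ ∧ φ e = 1 := by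
  have he0 : Ideal.Quotient.mk I e ≠ 0 := fun h ↦ heI (Ideal.Quotient.eq_zero_iff_mem.mp h)
  obtain ⟨f, hf⟩ := Module.Projective.exists_dual_eq_one K he0
  refine ⟨f ∘ₗ (Ideal.Quotient.mkₐ K I).toLinearMap ∘ₗ homogeneousComponent j,
    fun p ↦ ?_, fun p hp q ↦ ?_, ?_⟩
  · simp [homogeneousComponent_eq_self (homogeneousComponent_isHomogeneous j p)]
  · have hpq := Ideal.Quotient.eq_zero_iff_mem.mpr (hI _ (I.mul_mem_right q hp) j)
    simp [hpq]
  · simpa [homogeneousComponent_eq_self he] using hf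

end IsHomogIdeal

theorem IsAG.exists_eq_annIdeal (h : IsAG I) : ∃ j φ, ConcentratedIn φ j ∧ I = annIdeal φ := by
  obtain ⟨hI, -, hfin, hsoc⟩ := h
  obtain ⟨j, e, he, heI, hspan⟩ := hI.exists_isHomogeneous_of_finrank_socleSub hsoc
  obtain ⟨φ, hφ, hle, hφe⟩ := hI.exists_concentratedIn he heI
  refine ⟨j, φ, hφ, hle.antisymm fun p hp ↦ ?_⟩
  by_contra hpI
  obtain ⟨q, hqp, hsocle⟩ := hI.exists_mul_mem_socleSub hpI
  obtain ⟨c, hc⟩ := hspan _ hsocle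
  have hφc : φ (q * p) - c = 0 := by
    simpa [hφe] using apply_eq_zero_of_mem_annIdeal (hle hc)
  rw [mul_comm, hp q, zero_sub, neg_eq_zero] at hφc
  rw [hφc, zero_smul, sub_zero] at hc
  exact hqp hc

theorem IsAG.exists_isSISequence {I : Ideal (MvPolynomial (Fin 3) K)} (h : IsAG I) :
    ∃ j, IsSISequence j (hilbFn I) := by
  obtain ⟨j, φ, hφ, rfl⟩ := h.exists_eq_annIdeal
  exact ⟨j, hφ.isSISequence⟩

theorem mem_annIdeal_of_mk_mem_socleSub {p : MvPolynomial (Fin n) K}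
    (hp : Ideal.Quotient.mk (annIdeal φ) p ∈ socleSub (annIdeal φ)) (hp0 : φ p = 0) :
    p ∈ annIdeal φ := by
  rw [mk_mem_socleSub] at hp
  intro q
  induction q using MvPolynomial.induction_on with
  | C c => rw [mul_comm, ← smul_eq_C_mul, map_smul, hp0, smul_zero]
  | add a b ha hb => rw [mul_add, map_add, ha, hb, add_zero]
  | mul_X a v _ =>
    rw [mul_comm a, ← mul_assoc, mul_comm p]
    exact hp v a

namespace ConcentratedIn

theorem finiteDimensional_quotient (h : ConcentratedIn φ j) :
    FiniteDimensional K (MvPolynomial (Fin n) K ⧸ annIdeal φ) := by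
  refine Module.Finite.of_surjective ((Ideal.Quotient.mkₐ K (annIdeal φ)).toLinearMap.domRestrict
    (restrictTotalDegree (Fin n) K j)) ?_
  rw [← LinearMap.range_eq_top, LinearMap.range_domRestrict, eq_top_iff]
  rintro x -
  obtain ⟨p, rfl⟩ := Ideal.Quotient.mk_surjective x
  rw [← sum_homogeneousComponent p, map_sum]
  refine Submodule.sum_mem _ fun i _ ↦ ?_
  have hi := homogeneousComponent_isHomogeneous i p
  rcases lt_or_ge j i with hij | hij
  · rw [Ideal.Quotient.eq_zero_iff_mem.mpr (h.mem_annIdeal_of_lt hi hij)]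
    exact zero_mem _
  · exact ⟨_, (mem_restrictTotalDegree _ _ _).mpr (hi.totalDegree_le.trans hij), rfl⟩

theorem finrank_socleSub (h : ConcentratedIn φ j) (hφ : φ ≠ 0) :
    Module.finrank K (socleSub (annIdeal φ)) = 1 := by
  obtain ⟨p, hp⟩ := DFunLike.ne_iff.mp hφ
  rw [← h] at hp
  set e := homogeneousComponent j p
  have he : Ideal.Quotient.mk (annIdeal φ) e ∈ socleSub (annIdeal φ) :=
    mk_mem_socleSub.mpr fun v ↦ h.mem_annIdeal_of_lt
      ((isHomogeneous_X K v).mul (homogeneousComponent_isHomogeneous j p)) (by lia)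
  have he0 : (⟨_, he⟩ : socleSub (annIdeal φ)) ≠ 0 := fun h0 ↦ hp
    (apply_eq_zero_of_mem_annIdeal (Ideal.Quotient.eq_zero_iff_mem.mp (congrArg Subtype.val h0)))
  refine (finrank_eq_one_iff_of_nonzero' _ he0).mpr fun ⟨x, hx⟩ ↦ ?_
  obtain ⟨q, rfl⟩ := Ideal.Quotient.mk_surjective x
  set c := φ q * (φ e)⁻¹
  have hsub : Ideal.Quotient.mk (annIdeal φ) (c • e - q) ∈ socleSub (annIdeal φ) :=
    Submodule.sub_mem _ (Submodule.smul_mem _ c he) hx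
  have hφ0 : φ (c • e - q) = 0 := by
    rw [map_sub, map_smul, smul_eq_mul, inv_mul_cancel_right₀ hp, sub_self]
  exact ⟨c, Subtype.ext (Ideal.Quotient.eq.mpr (mem_annIdeal_of_mk_mem_socleSub hsub hφ0))⟩

theorem isAG (h : ConcentratedIn φ j) (hφ : φ ≠ 0) : IsAG (annIdeal φ) :=
  ⟨h.isHomogIdeal, fun htop ↦ hφ (LinearMap.ext fun _ ↦
    apply_eq_zero_of_mem_annIdeal (htop ▸ Submodule.mem_top)),
    h.finiteDimensional_quotient, h.finrank_socleSub hφ⟩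

end ConcentratedIn

end MacaulayDuality

section Realization

theorem hilbFn_annIdeal_eq_card {φ : MvPolynomial (Fin n) K →ₗ[K] K} {i : ℕ} {ι : Type*}
    [Fintype ι] {f g : ι → MvPolynomial (Fin n) K} (hf : ∀ a, (f a).IsHomogeneous i)
    (hfg : ∀ a b, φ (f a * g b) = if a = b then 1 else 0)
    (hspan : homogeneousSubmodule (Fin n) K i ≤
      Submodule.span K (Set.range f) ⊔ (annIdeal φ).restrictScalars K) :
    hilbFn (annIdeal φ) i = Fintype.card ι := by
  set π := (Ideal.Quotient.mkₐ K (annIdeal φ)).toLinearMap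
  have hgraded : gradedPiece (annIdeal φ) i = Submodule.span K (Set.range (π ∘ f)) := by
    rw [Set.range_comp, Submodule.span_image]
    apply le_antisymm
    · rintro _ ⟨p, hp, rfl⟩
      obtain ⟨a, ha, b, hb, rfl⟩ := Submodule.mem_sup.mp (hspan hp)
      have hb0 : π b = 0 := Ideal.Quotient.eq_zero_iff_mem.mpr hb
      exact ⟨a, ha, by rw [map_add, hb0, add_zero]⟩
    · exact Submodule.map_mono (Submodule.span_le.mpr (Set.range_subset_iff.mpr hf))
  have hindep : LinearIndependent K (π ∘ f) := by
    rw [Fintype.linearIndependent_iff]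
    intro c hc b
    have hmem : ∑ a, c a • f a ∈ annIdeal φ := by
      rw [← Ideal.Quotient.eq_zero_iff_mem]
      change π (∑ a, c a • f a) = 0
      simpa only [map_sum, map_smul, Function.comp_apply] using hc
    simpa [Finset.sum_mul, hfg] using hmem (g b)
  rw [hilbFn, hgraded, finrank_span_eq_card hindep]

variable (K) in
/-- The linear functional on polynomials which sums the coefficients of the monomials with exponent
vector in `S`. It is the inverse system of the polynomial `∑ d ∈ S, X ^ d`. -/
def coeffSum (S : Set (Fin n →₀ ℕ)) : MvPolynomial (Fin n) K →ₗ[K] K :=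
  (basisMonomials (Fin n) K).constr K (S.indicator 1)

section CoeffSum

variable {S : Set (Fin n →₀ ℕ)} {d : Fin n →₀ ℕ}

theorem coeffSum_monomial (S : Set (Fin n →₀ ℕ)) (d : Fin n →₀ ℕ) (c : K) :
    coeffSum K S (monomial d c) = if d ∈ S then c else 0 := by
  have h : coeffSum K S (monomial d 1) = S.indicator 1 d := by
    have := (basisMonomials (Fin n) K).constr_basis K (S.indicator (1 : (Fin n →₀ ℕ) → K)) d
    rwa [coe_basisMonomials] at this
  rw [← mul_one c, ← smul_eq_mul, ← smul_monomial, map_smul, h, Set.indicator_apply]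
  simp

theorem coeffSum_ne_zero (hd : d ∈ S) : coeffSum K S ≠ 0 := fun h ↦ by
  simpa [h, hd] using coeffSum_monomial S d (1 : K)

theorem concentratedIn_coeffSum {j : ℕ} (hS : ∀ d ∈ S, d.degree = j) :
    ConcentratedIn (coeffSum K S) j := by
  intro p
  induction p using MvPolynomial.induction_on' with
  | add p q hp hq => rw [map_add, map_add, map_add, hp, hq]
  | monomial d c =>
    rw [homogeneousComponent_of_mem (isHomogeneous_monomial c rfl)]
    split_ifs with h
    · rfl
    · rw [map_zero, coeffSum_monomial, if_neg fun hd ↦ h (hS d hd).symm]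

theorem monomial_mem_annIdeal_coeffSum (h : ∀ d', d + d' ∉ S) (c : K) :
    monomial d c ∈ annIdeal (coeffSum K S) := by
  intro q
  induction q using MvPolynomial.induction_on' with
  | add p q hp hq => rw [mul_add, map_add, hp, hq, add_zero]
  | monomial d' c' => rw [monomial_mul, coeffSum_monomial, if_neg (h d')]

theorem hilbFn_annIdeal_coeffSum {i : ℕ} {ι : Type*} [Fintype ι] {r s : ι → Fin n →₀ ℕ}
    (hr : ∀ a, (r a).degree = i) (hrs : ∀ a b, r a + s b ∈ S ↔ a = b)
    (hrow : ∀ d d', d.degree = i → d + d' ∈ S → d ∈ Set.range r) :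
    hilbFn (annIdeal (coeffSum K S)) i = Fintype.card ι := by
  refine hilbFn_annIdeal_eq_card (f := fun a ↦ monomial (r a) 1) (g := fun a ↦ monomial (s a) 1)
    (fun a ↦ isHomogeneous_monomial _ (hr a)) (fun a b ↦ ?_) fun p hp ↦ ?_
  · simp [monomial_mul, coeffSum_monomial, hrs]
  · rw [p.as_sum]
    refine Submodule.sum_mem _ fun d hd ↦ ?_
    have hdeg : d.degree = i := by
      by_contra hne
      exact mem_support_iff.mp hd (IsHomogeneous.coeff_eq_zero hp hne)
    by_cases hdS : ∃ d', d + d' ∈ S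
    · obtain ⟨d', hd'⟩ := hdS
      obtain ⟨a, rfl⟩ := hrow d d' hdeg hd'
      rw [← mul_one (coeff _ p), ← smul_eq_mul, ← smul_monomial]
      exact Submodule.mem_sup_left
        (Submodule.smul_mem _ _ (Submodule.subset_span (Set.mem_range_self a)))
    · push Not at hdS
      exact Submodule.mem_sup_right (monomial_mem_annIdeal_coeffSum hdS _)

end CoeffSum

/-- The exponent vector of the monomial `X t ^ a * X (t + 1) ^ b` in three variables, with indices
modulo `3`. -/
def binaryExponent (t : Fin 3) (a b : ℕ) : Fin 3 →₀ ℕ :=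
  Finsupp.single t a + Finsupp.single (t + 1) b

/-- The exponent vectors of the three monomials `X t ^ (j - e t) * X (t + 1) ^ e t`. -/
def cyclicExponents (j : ℕ) (e : Fin 3 → ℕ) : Set (Fin 3 →₀ ℕ) :=
  Set.range fun t ↦ binaryExponent t (j - e t) (e t)

theorem eq_binaryExponent_iff {d : Fin 3 →₀ ℕ} {t : Fin 3} {a b : ℕ} :
    d = binaryExponent t a b ↔ d t = a ∧ d (t + 1) = b ∧ d (t + 2) = 0 := by
  rw [Finsupp.ext_iff, Fin.forall_fin_succ]
  fin_cases t <;> simp [binaryExponent, Finsupp.single_apply, Fin.forall_fin_succ] <;> tauto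

theorem degree_binaryExponent (t : Fin 3) (a b : ℕ) : (binaryExponent t a b).degree = a + b := by
  simp [binaryExponent]

variable (K) in
/-- The linear functional dual to the form
`X 0 ^ (j - e 0) * X 1 ^ e 0 + X 1 ^ (j - e 1) * X 2 ^ e 1 + X 2 ^ (j - e 2) * X 0 ^ e 2`. -/
def cyclicForm (j : ℕ) (e : Fin 3 → ℕ) : MvPolynomial (Fin 3) K →ₗ[K] K :=
  coeffSum K (cyclicExponents j e)

section CyclicForm

variable {i j : ℕ} {e : Fin 3 → ℕ}

theorem mem_cyclicExponents {d : Fin 3 →₀ ℕ} :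
    d ∈ cyclicExponents j e ↔ ∃ t, d t = j - e t ∧ d (t + 1) = e t ∧ d (t + 2) = 0 := by
  simp only [cyclicExponents, Set.mem_range, eq_comm (b := d), eq_binaryExponent_iff]

theorem binaryExponent_add_mem_cyclicExponents (hi : 2 * i ≤ j) (he : ∀ t, 2 * (e t + 1) ≤ j)
    {t t' : Fin 3} {u u' : ℕ} (hu : u < min (e t + 1) i) (hu' : u' < min (e t' + 1) i) :
    binaryExponent t (i - u) u + binaryExponent t' (j - e t' - (i - u')) (e t' - u') ∈
      cyclicExponents j e ↔ t = t' ∧ u = u' := by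
  have := he 0
  have := he 1
  have := he 2
  rw [mem_cyclicExponents, Fin.exists_fin_succ, Fin.exists_fin_succ, Fin.exists_fin_succ]
  fin_cases t <;> fin_cases t' <;> simp [binaryExponent, Finsupp.single_apply] at * <;> lia

theorem exists_eq_binaryExponent_of_add_mem (hi : 1 ≤ i)
    {d d' : Fin 3 →₀ ℕ} (hd : d.degree = i) (hdd' : d + d' ∈ cyclicExponents j e) :
    ∃ t u, u < min (e t + 1) i ∧ binaryExponent t (i - u) u = d := by
  obtain ⟨t, ht⟩ := hdd'
  obtain ⟨h₀, h₁, h₂⟩ := eq_binaryExponent_iff.mp ht.symm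
  simp only [Finsupp.add_apply] at h₀ h₁ h₂
  have hdeg : d t + d (t + 1) + d (t + 2) = i := by
    rw [← hd, Finsupp.degree_eq_sum, Fin.sum_univ_three]
    fin_cases t <;> simp <;> lia
  rcases lt_or_ge (d (t + 1)) i with hlt | hge
  · refine ⟨t, d (t + 1), by lia, (eq_binaryExponent_iff.mpr ?_).symm⟩
    lia
  · refine ⟨t + 1, 0, by lia, (eq_binaryExponent_iff.mpr ?_).symm⟩
    rw [show t + 1 + 1 = t + 2 by grind, show t + 1 + 2 = t by grind]
    lia

theorem hilbFn_annIdeal_cyclicForm (hi : 1 ≤ i) (hij : 2 * i ≤ j)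
    (he : ∀ t, 2 * (e t + 1) ≤ j) :
    hilbFn (annIdeal (cyclicForm K j e)) i = ∑ t, min (e t + 1) i := by
  let ι := (Finset.univ : Finset (Fin 3)).sigma fun t ↦ Finset.range (min (e t + 1) i)
  have hι (a : ι) : a.1.2 < min (e a.1.1 + 1) i :=
    Finset.mem_range.mp (Finset.mem_sigma.mp a.2).2
  have hcard : Fintype.card ι = ∑ t, min (e t + 1) i := by simp [ι]
  rw [← hcard]
  refine hilbFn_annIdeal_coeffSum (r := fun a : ι ↦ binaryExponent a.1.1 (i - a.1.2) a.1.2)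
    (s := fun a : ι ↦ binaryExponent a.1.1 (j - e a.1.1 - (i - a.1.2)) (e a.1.1 - a.1.2))
    (fun a ↦ ?_) (fun a b ↦ ?_) fun d d' hd hdd' ↦ ?_
  · have := hι a
    rw [degree_binaryExponent]
    lia
  · rw [binaryExponent_add_mem_cyclicExponents hij he (hι a) (hι b), Subtype.ext_iff,
      Sigma.ext_iff, heq_iff_eq]
  · obtain ⟨t, u, hu, h⟩ := exists_eq_binaryExponent_of_add_mem hi hd hdd'
    exact ⟨⟨⟨t, u⟩, by simpa [ι] using hu⟩, h⟩

theorem hilbFn_annIdeal_cyclicForm_zero (j : ℕ) (e : Fin 3 → ℕ) :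
    hilbFn (annIdeal (cyclicForm K j e)) 0 = 1 :=
  hilbFn_annIdeal_coeffSum (ι := Unit) (r := 0) (s := fun _ ↦ binaryExponent 0 (j - e 0) (e 0))
    (fun _ ↦ map_zero _) (fun _ _ ↦ by simp [cyclicExponents])
    fun d _ hd _ ↦ ⟨(), ((Finsupp.degree_eq_zero_iff d).mp hd).symm⟩

theorem concentratedIn_cyclicForm (he : ∀ t, e t ≤ j) : ConcentratedIn (cyclicForm K j e) j := by
  refine concentratedIn_coeffSum ?_
  rintro _ ⟨t, rfl⟩
  rw [degree_binaryExponent, Nat.sub_add_cancel (he t)]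

theorem cyclicForm_ne_zero (j : ℕ) (e : Fin 3 → ℕ) : cyclicForm K j e ≠ 0 :=
  coeffSum_ne_zero (Set.mem_range_self 0)

end CyclicForm

variable (K) in
theorem exists_isAG_hilbFn_eq_repSeq {e : Fin 3 → ℕ} {m k : ℕ} (hk : 1 ≤ k)
    (he : ∀ t, e t ≤ m) {L : List ℕ}
    (hL : L = 1 :: (List.range m).map fun i ↦ ∑ t, min (e t + 1) (i + 1)) :
    ∃ I : Ideal (MvPolynomial (Fin 3) K), IsAG I ∧
      ∀ i, hilbFn I i = repSeq L (∑ t, (e t + 1)) k L.reverse i := by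
  have hlen : L.length = m + 1 := by simp [hL]
  let j := 2 * m + k + 1
  have hej (t) : 2 * (e t + 1) ≤ j := by
    have := he t
    lia
  have hφ : ConcentratedIn (cyclicForm K j e) j := concentratedIn_cyclicForm fun t ↦ by
    have := hej t
    lia
  refine ⟨_, hφ.isAG (cyclicForm_ne_zero j e), eq_repSeq_of_symm (by lia)
    (fun _ hi ↦ hφ.hilbFn_annIdeal_of_lt hi) (fun _ hi ↦ hφ.hilbFn_annIdeal_symm hi) ?_ ?_⟩
  · rintro (_ | i) hi
    · simp [hL, hilbFn_annIdeal_cyclicForm_zero]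
    · rw [hilbFn_annIdeal_cyclicForm (by lia) (by lia) hej, hL, List.getD_cons_succ,
        List.getD_eq_getElem _ _ (by simp; lia)]
      simp
  · intro i hi hij
    rw [hilbFn_annIdeal_cyclicForm (by lia) hij hej]
    refine Finset.sum_congr rfl fun t _ ↦ min_eq_left ?_
    have := he t
    lia

variable (K) in
theorem HasSmallShape.exists_isAG {T : ℕ → ℕ} (h : HasSmallShape T) :
    ∃ I : Ideal (MvPolynomial (Fin 3) K), IsAG I ∧ ∀ i, hilbFn I i = T i := by
  obtain ⟨k, hk, h⟩ := h
  rcases h with h | h | h | h | h | h | h <;> simp only [h]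
  · exact exists_isAG_hilbFn_eq_repSeq K (e := ![0, 0, 0]) (m := 0) hk (by decide) rfl
  · exact exists_isAG_hilbFn_eq_repSeq K (e := ![1, 0, 0]) (m := 1) hk (by decide) rfl
  · exact exists_isAG_hilbFn_eq_repSeq K (e := ![2, 0, 0]) (m := 2) hk (by decide) rfl
  · exact exists_isAG_hilbFn_eq_repSeq K (e := ![3, 0, 0]) (m := 3) hk (by decide) rfl
  · exact exists_isAG_hilbFn_eq_repSeq K (e := ![1, 1, 0]) (m := 1) hk (by decide) rfl
  · exact exists_isAG_hilbFn_eq_repSeq K (e := ![2, 1, 0]) (m := 2) hk (by decide) rfl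
  · exact exists_isAG_hilbFn_eq_repSeq K (e := ![1, 1, 1]) (m := 1) hk (by decide) rfl

end Realization

/-- the codimension three Gorenstein sequences of Sperner number at
most six are exactly `(1,3^k,1)`, `(1,3,4^k,3,1)`, `(1,3,4,5^k,4,3,1)`,
`(1,3,4,5,6^k,5,4,3,1)`, `(1,3,5^k,3,1)`, `(1,3,5,6^k,5,3,1)`, `(1,3,6^k,3,1)`
with `k ≥ 1`. -/
theorem stmt4 (T : ℕ → ℕ) :
    ((∃ I : Ideal (MvPolynomial (Fin 3) K), IsAG I ∧ ∀ i, hilbFn I i = T i) ∧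
        T 1 = 3 ∧ (∀ i, T i ≤ 6)) ↔
    ∃ k : ℕ, 1 ≤ k ∧
      ((∀ i, T i = repSeq [1] 3 k [1] i) ∨
       (∀ i, T i = repSeq [1, 3] 4 k [3, 1] i) ∨
       (∀ i, T i = repSeq [1, 3, 4] 5 k [4, 3, 1] i) ∨
       (∀ i, T i = repSeq [1, 3, 4, 5] 6 k [5, 4, 3, 1] i) ∨
       (∀ i, T i = repSeq [1, 3] 5 k [3, 1] i) ∨
       (∀ i, T i = repSeq [1, 3, 5] 6 k [5, 3, 1] i) ∨
       (∀ i, T i = repSeq [1, 3] 6 k [3, 1] i)) := by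
  change _ ↔ HasSmallShape T
  constructor
  · rintro ⟨⟨I, hI, hT⟩, h1, h6⟩
    obtain rfl : hilbFn I = T := funext hT
    obtain ⟨j, hj⟩ := hI.exists_isSISequence
    exact hj.hasSmallShape h1 h6
  · exact fun h ↦ ⟨h.exists_isAG K, h.apply_one, h.le_six⟩
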